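/- arXiv:2601.13363 — 7 statements merged into one kernel-verified Lean document; each statement's English description precedes it below -/
import Mathlib

section
/- Let (X,d) be an ultrametric space with distance set D(X) and center of distances C(X). If diam X belongs to D(X), then diam X belongs to C(X). -/
open scoped ENNReal

/-- The distance set `D(X) = {d(x,y) : x,y ∈ X}` of a metric space, with distances
recorded as extended non-negative reals. -/
def distSet (X : Type*) [MetricSpace X] : Set ℝ≥0∞ :=
  {t | ∃ x y : X, edist x y = t}

/-- The center of distances `C(X) = {t ∈ D(X) : ∀ p ∈ X, ∃ x ∈ X, d(p,x) = t}`. -/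
def centerOfDistances (X : Type*) [MetricSpace X] : Set ℝ≥0∞ :=
  {t | t ∈ distSet X ∧ ∀ p : X, ∃ x : X, edist p x = t}

/-!
If `d(x,y) = diam X`, then for every `p` the strong triangle inequality through `p` bounds `diam X`
by `max (d(p,x)) (d(p,y))`. Both of these distances are at most `diam X`, so the larger one equals
it.
-/

section

variable {X : Type*} [PseudoMetricSpace X] [IsUltrametricDist X]

theorem edist_triangle_max (x y z : X) : edist x z ≤ max (edist x y) (edist y z) := by
  simpa only [edist_dist, ENNReal.ofReal_max] using
    ENNReal.ofReal_le_ofReal (dist_triangle_max x y z)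

theorem exists_mem_edist_eq_ediam {s : Set X} {x y p : X} (hx : x ∈ s) (hy : y ∈ s) (hp : p ∈ s)
    (hxy : edist x y = Metric.ediam s) : ∃ z ∈ s, edist p z = Metric.ediam s := by
  have hmax : Metric.ediam s ≤ max (edist p x) (edist p y) := by
    simpa only [hxy, edist_comm x p] using edist_triangle_max x p y
  rcases le_max_iff.mp hmax with hpx | hpy
  · exact ⟨x, hx, (Metric.edist_le_ediam_of_mem hp hx).antisymm hpx⟩
  · exact ⟨y, hy, (Metric.edist_le_ediam_of_mem hp hy).antisymm hpy⟩

end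

/-- Let `(X,d)` be an ultrametric space. If `diam X ∈ D(X)`,
then `diam X ∈ C(X)`. -/
theorem diam_mem_centerOfDistances
    {X : Type*} [MetricSpace X] [IsUltrametricDist X]
    (h : EMetric.diam (Set.univ : Set X) ∈ distSet X) :
    EMetric.diam (Set.univ : Set X) ∈ centerOfDistances X := by
  refine ⟨h, fun p => ?_⟩
  obtain ⟨x, y, hxy⟩ := h
  obtain ⟨z, -, hpz⟩ :=
    exists_mem_edist_eq_ediam (Set.mem_univ x) (Set.mem_univ y) (Set.mem_univ p) hxy
  exact ⟨z, hpz⟩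
end

section
/- Let T be a tree (a connected acyclic simple graph) and let l : V(T) → [0,∞) be a labeling. Define d_l : V(T) × V(T) → [0,∞) by d_l(u,v) = max of l(w) over all vertices w on the unique path in T joining u and v when u ≠ v, and d_l(u,u) = 0. Then d_l is an ultrametric on V(T) if and only if max{l(u), l(v)} > 0 holds for every edge {u,v} of T. -/
open scoped Classical

/-- The ultrametric-candidate `d_l` generated by a labeling `l` on the vertex set of a
tree `G`: for `u ≠ v` it is the maximum of `l` over the vertices of the unique path
joining `u` and `v`, and `d_l(u,u) = 0`.  (The fold starts at `l u`, and `u` itself lies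
on the path, so the value is exactly the maximum of `l` over the path's vertices.) -/
noncomputable def dl {V : Type*} {G : SimpleGraph V} (hG : G.IsTree) (l : V → ℝ)
    (u v : V) : ℝ :=
  if u = v then 0
  else (((hG.existsUnique_path u v).exists.choose.support).map l).foldr max (l u)

/-- `d` is an ultrametric on `V`: it is symmetric, vanishes exactly on the diagonal,
is positive off the diagonal, and satisfies the strong triangle inequality. -/
def IsUltrametricOn {V : Type*} (d : V → V → ℝ) : Prop :=
  (∀ u v, d u v = d v u) ∧ (∀ u, d u u = 0) ∧ (∀ u v, u ≠ v → 0 < d u v) ∧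
    (∀ x y z, d x y ≤ max (d x z) (d z y))

/-!
For `u ≠ v` and a real `c`, one has `d_l(u,v) ≤ c` exactly when every label on the path from `u` to
`v` is at most `c`. Every walk from `u` to `v` passes through all vertices of that path, so
any walk whose labels are at most `c` already gives `d_l(u,v) ≤ c`; concatenating the paths `x → z`
and `z → y` yields the strong triangle inequality. Positivity is read off edges: `d_l` of an edge is
the maximum of its two labels, and `d_l(u,v)` dominates both labels of the first edge of the path.
-/

lemma foldr_sup_le_iff {α : Type*} [SemilatticeSup α] {L : List α} {a c : α} :
    L.foldr (· ⊔ ·) a ≤ c ↔ a ≤ c ∧ ∀ x ∈ L, x ≤ c := by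
  induction L with
  | nil => simp
  | cons x L ih => rw [List.foldr_cons, sup_le_iff, ih, List.forall_mem_cons, and_left_comm]

section

variable {V : Type*} {G : SimpleGraph V} (hG : G.IsTree) (l : V → ℝ) {u v : V}

lemma dl_self (u : V) : dl hG l u u = 0 :=
  if_pos rfl

lemma dl_le_iff_of_isPath (huv : u ≠ v) {p : G.Walk u v} (hp : p.IsPath) {c : ℝ} :
    dl hG l u v ≤ c ↔ ∀ w ∈ p.support, l w ≤ c := by
  have hunique := hG.existsUnique_path u v
  have hchoose : hunique.exists.choose = p := hunique.unique hunique.exists.choose_spec hp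
  rw [dl, if_neg huv, hchoose, foldr_sup_le_iff, List.forall_mem_map]
  exact and_iff_right_of_imp fun h => h u p.start_mem_support

lemma label_le_dl_of_isPath (huv : u ≠ v) {p : G.Walk u v} (hp : p.IsPath) {w : V}
    (hw : w ∈ p.support) : l w ≤ dl hG l u v :=
  (dl_le_iff_of_isPath hG l huv hp).1 le_rfl w hw

lemma dl_le_of_walk (huv : u ≠ v) (p : G.Walk u v) {c : ℝ} (hc : ∀ w ∈ p.support, l w ≤ c) :
    dl hG l u v ≤ c :=
  (dl_le_iff_of_isPath hG l huv p.bypass_isPath).2 fun w hw =>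
    hc w (p.support_bypass_subset_support hw)

lemma dl_comm (u v : V) : dl hG l u v = dl hG l v u := by
  obtain rfl | huv := eq_or_ne u v
  · rfl
  obtain ⟨p, hp⟩ := hG.connected.exists_isPath u v
  refine eq_of_forall_ge_iff fun c => ?_
  rw [dl_le_iff_of_isPath hG l huv hp, dl_le_iff_of_isPath hG l huv.symm hp.reverse]
  simp only [SimpleGraph.Walk.support_reverse, List.mem_reverse]

lemma dl_of_adj (huv : G.Adj u v) : dl hG l u v = max (l u) (l v) := by
  refine eq_of_forall_ge_iff fun c => ?_
  rw [dl_le_iff_of_isPath hG l huv.ne huv.isPath_toWalk, huv.support_toWalk,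
    List.forall_mem_cons, List.forall_mem_singleton, max_le_iff]

lemma dl_le_max_of_ne {x y : V} (hxy : x ≠ y) (z : V) :
    dl hG l x y ≤ max (dl hG l x z) (dl hG l z y) := by
  obtain rfl | hxz := eq_or_ne x z
  · exact le_max_right _ _
  obtain rfl | hzy := eq_or_ne z y
  · exact le_max_left _ _
  obtain ⟨p, hp⟩ := hG.connected.exists_isPath x z
  obtain ⟨q, hq⟩ := hG.connected.exists_isPath z y
  refine dl_le_of_walk hG l hxy (p.append q) fun w hw => ?_
  obtain hwp | hwq := (p.mem_support_append_iff q).1 hw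
  · exact le_max_of_le_left (label_le_dl_of_isPath hG l hxz hp hwp)
  · exact le_max_of_le_right (label_le_dl_of_isPath hG l hzy hq hwq)

lemma exists_adj_max_le_dl (huv : u ≠ v) : ∃ w, G.Adj u w ∧ max (l u) (l w) ≤ dl hG l u v := by
  obtain ⟨p, hp⟩ := hG.connected.exists_isPath u v
  exact ⟨p.snd, p.adj_snd (SimpleGraph.Walk.not_nil_of_ne huv),
    max_le (label_le_dl_of_isPath hG l huv hp p.start_mem_support)
      (label_le_dl_of_isPath hG l huv hp (p.getVert_mem_support 1))⟩

lemma dl_pos_iff_forall_adj :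
    (∀ u v, u ≠ v → 0 < dl hG l u v) ↔ ∀ u v, G.Adj u v → 0 < max (l u) (l v) := by
  constructor
  · intro hpos u v huv
    exact dl_of_adj hG l huv ▸ hpos u v huv.ne
  · intro hedge u v huv
    obtain ⟨w, huw, hle⟩ := exists_adj_max_le_dl hG l huv
    exact (hedge u w huw).trans_le hle

theorem dl_isUltrametric_iff_general :
    IsUltrametricOn (dl hG l) ↔ ∀ u v : V, G.Adj u v → 0 < max (l u) (l v) := by
  rw [← dl_pos_iff_forall_adj hG l]
  refine ⟨fun h => h.2.2.1, fun hpos => ⟨dl_comm hG l, dl_self hG l, hpos, fun x y z => ?_⟩⟩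
  obtain rfl | hxy := eq_or_ne x y
  · obtain rfl | hxz := eq_or_ne x z
    · exact le_max_left _ _
    · exact (dl_self hG l x).trans_le (le_max_of_le_left (hpos x z hxz).le)
  · exact dl_le_max_of_ne hG l hxy z

end

/-- For a tree `G` with labeling `l : V → [0,∞)`, the map `d_l` is an
ultrametric on the vertex set if and only if `max {l u, l v} > 0` for every edge
`{u,v}` of the tree. -/
theorem dl_isUltrametric_iff {V : Type*} {G : SimpleGraph V} (hG : G.IsTree)
    (l : V → ℝ) (hl0 : ∀ v, 0 ≤ l v) :
    IsUltrametricOn (dl hG l) ↔ ∀ u v : V, G.Adj u v → 0 < max (l u) (l v) :=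
  dl_isUltrametric_iff_general hG l
end

section
/- Let (X,d) be a UT-space with at least two points, let D(X) be its distance set and C(X) its center of distances. Then either C(X) = {0} or C(X) = {0, diam X}; moreover, the equality C(X) = {0, diam X} holds if and only if diam X ∈ D(X). -/
open scoped Classical ENNReal

universe u

/-- `(X,d)` is a **UT-space**: it is isometric to `(V(T), d_l)` for some labeled tree
`(T,l)` with a non-degenerate labeling `l : V(T) → [0,∞)`. -/
def IsUTSpace (X : Type u) [MetricSpace X] : Prop :=
  ∃ (V : Type u) (G : SimpleGraph V) (hG : G.IsTree) (l : V → ℝ),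
    (∀ v, 0 ≤ l v) ∧
    (∀ u v : V, G.Adj u v → 0 < max (l u) (l v)) ∧
    ∃ Φ : X → V, Function.Bijective Φ ∧ ∀ x y : X, dist x y = dl hG l (Φ x) (Φ y)

/-! Every nonzero distance in a UT-space is the label of some vertex `w`, and the label of `w`
bounds from below the distance from `w` to any other point. So an element `t ≠ 0` of the center,
being a distance from every such `w`, is at least every distance. Conversely, if the nonzero
diameter is attained, the vertex `w` carrying it as a label is at that distance from all other
points. -/

section TreeUltrametric

variable {V : Type*} {G : SimpleGraph V} (hG : G.IsTree) (l : V → ℝ) {u v : V}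

theorem label_le_dl (huv : u ≠ v) : l u ≤ dl hG l u v := by
  rw [dl, if_neg huv]
  exact List.foldrRecOn (motive := (l u ≤ ·)) _ _ le_rfl fun _ ih _ _ => le_max_of_le_right ih

theorem dl_mem_range_label (huv : u ≠ v) : dl hG l u v ∈ Set.range l := by
  rw [dl, if_neg huv]
  refine List.foldrRecOn (motive := (· ∈ Set.range l)) _ _ (Set.mem_range_self u) ?_
  intro b hb a ha
  obtain ⟨w, -, hw⟩ := List.mem_map.1 ha
  rcases max_choice a b with h | h <;> rw [h]
  exacts [⟨w, hw⟩, hb]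

end TreeUltrametric

/-- The property of UT-spaces that determines their center of distances: each distance is at most
the distance from some point `w` to every other point. For a tree ultrametric, `w` is a vertex
labeled by the given distance. -/
def DistancesDominated (X : Type*) [PseudoEMetricSpace X] : Prop :=
  ∀ x y : X, ∃ w : X, ∀ z, z ≠ w → edist x y ≤ edist w z

theorem IsUTSpace.distancesDominated {X : Type u} [MetricSpace X] (hX : IsUTSpace X) :
    DistancesDominated X := by
  obtain ⟨V, G, hG, l, -, -, Φ, hΦ, hdist⟩ := hX
  intro x y
  rcases eq_or_ne x y with rfl | hxy
  · exact ⟨x, fun z _ => by simp⟩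
  obtain ⟨v, hv⟩ := dl_mem_range_label hG l (hΦ.injective.ne hxy)
  obtain ⟨w, rfl⟩ := hΦ.surjective v
  refine ⟨w, fun z hz => ?_⟩
  rw [edist_dist, edist_dist, hdist, hdist, ← hv]
  exact ENNReal.ofReal_le_ofReal (label_le_dl hG l (hΦ.injective.ne hz.symm))

theorem edist_le_ediam_univ {X : Type*} [PseudoEMetricSpace X] (x y : X) :
    edist x y ≤ Metric.ediam (Set.univ : Set X) :=
  Metric.edist_le_ediam_of_mem (Set.mem_univ x) (Set.mem_univ y)

section CenterOfDistances

variable {X : Type*} [MetricSpace X]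

theorem zero_mem_centerOfDistances [Nonempty X] : 0 ∈ centerOfDistances X :=
  ⟨‹Nonempty X›.elim fun x => ⟨x, x, edist_self x⟩, fun p => ⟨p, edist_self p⟩⟩

namespace DistancesDominated

theorem centerOfDistances_subset (hX : DistancesDominated X) :
    centerOfDistances X ⊆ {0, Metric.ediam (Set.univ : Set X)} := by
  rintro t ⟨⟨a, b, rfl⟩, hcenter⟩
  refine or_iff_not_imp_left.2 fun hne => (edist_le_ediam_univ a b).antisymm ?_
  refine Metric.ediam_le fun x _ y _ => ?_
  obtain ⟨w, hw⟩ := hX x y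
  obtain ⟨z, hz⟩ := hcenter w
  have hzw : z ≠ w := by
    rintro rfl
    exact hne (hz.symm.trans (edist_self z))
  exact (hw z hzw).trans_eq hz

theorem ediam_mem_centerOfDistances_iff (hX : DistancesDominated X) :
    Metric.ediam (Set.univ : Set X) ∈ centerOfDistances X ↔
      Metric.ediam (Set.univ : Set X) ∈ distSet X := by
  refine ⟨And.left, fun hmem => ⟨hmem, fun p => ?_⟩⟩
  obtain ⟨x, y, hxy⟩ := hmem
  obtain ⟨w, hw⟩ := hX x y
  have edist_eq {z : X} (hz : z ≠ w) : edist w z = Metric.ediam (Set.univ : Set X) :=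
    (edist_le_ediam_univ w z).antisymm (hxy ▸ hw z hz)
  rcases ne_or_eq p w with hp | rfl
  · exact ⟨w, (edist_comm p w).trans (edist_eq hp)⟩
  rcases ne_or_eq x p with hx | rfl
  exacts [⟨x, edist_eq hx⟩, ⟨y, hxy⟩]

end DistancesDominated

theorem centerOfDistances_of_UT_general [Nonempty X] (hX : DistancesDominated X) :
    (centerOfDistances X = {0} ∨
      centerOfDistances X = {0, Metric.ediam (Set.univ : Set X)}) ∧
    (centerOfDistances X = {0, Metric.ediam (Set.univ : Set X)} ↔
      Metric.ediam (Set.univ : Set X) ∈ distSet X) := by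
  have hsub := hX.centerOfDistances_subset
  have eq_pair_iff : centerOfDistances X = {0, Metric.ediam (Set.univ : Set X)} ↔
      Metric.ediam (Set.univ : Set X) ∈ centerOfDistances X :=
    ⟨fun h => h.superset (Set.mem_insert_of_mem _ rfl),
      fun h => hsub.antisymm (Set.pair_subset zero_mem_centerOfDistances h)⟩
  refine ⟨?_, eq_pair_iff.trans hX.ediam_mem_centerOfDistances_iff⟩
  by_cases hdiam : Metric.ediam (Set.univ : Set X) ∈ centerOfDistances X
  · exact Or.inr (eq_pair_iff.2 hdiam)
  · refine Or.inl (Set.Subset.antisymm (fun t ht => ?_)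
      (Set.singleton_subset_iff.2 zero_mem_centerOfDistances))
    exact (hsub ht).resolve_right fun h => hdiam (h ▸ ht)

end CenterOfDistances

/-- Let `(X,d)` be a UT-space with at least two points.  Then either
`C(X) = {0}` or `C(X) = {0, diam X}`; moreover, `C(X) = {0, diam X}` holds if and
only if `diam X ∈ D(X)`. -/
theorem centerOfDistances_of_UT
    {X : Type u} [MetricSpace X] [Nontrivial X] (hX : IsUTSpace X) :
    (centerOfDistances X = {0} ∨
      centerOfDistances X = {0, EMetric.diam (Set.univ : Set X)}) ∧
    (centerOfDistances X = {0, EMetric.diam (Set.univ : Set X)} ↔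
      EMetric.diam (Set.univ : Set X) ∈ distSet X) :=
  centerOfDistances_of_UT_general hX.distancesDominated
end

section
/- Let (X,d) be a UT-space with at least two points and let C(X) be its center of distances. Then C(X) = {0, diam X} holds if and only if X is a centered sphere in (X,d) whose radius equals diam X, i.e., there exists c ∈ X such that X = {x ∈ X : d(x,c) = diam X} ∪ {c}. -/
open scoped Classical ENNReal

universe u

/-!
The distance between distinct vertices `a` and `b` of `(V(T), d_l)` is the label of some vertex `c`,
and every other vertex is at distance at least `l c` from `c`, because `c` lies on every path ending
at `c`. So if `a` and `b` realize the diameter, which `diam X ∈ C(X)` makes possible, then all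
points other than `c` lie at distance exactly `diam X` from `c`.
-/

theorem isGreatest_foldr_max {α : Type*} [LinearOrder α] (a : α) (L : List α) :
    IsGreatest (insert a {x | x ∈ L}) (L.foldr max a) := by
  induction L with
  | nil => simp
  | cons b L ih =>
    have hcons : {x | x ∈ b :: L} = insert b {x | x ∈ L} := Set.ext fun _ => List.mem_cons
    rw [hcons, Set.insert_comm]
    exact ih.insert b

section LabeledTree

variable {V : Type*} {G : SimpleGraph V} (hG : G.IsTree) (l : V → ℝ) {u v : V}

theorem isGreatest_dl (huv : u ≠ v) {p : G.Walk u v} (hp : p.IsPath) :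
    IsGreatest (l '' {w | w ∈ p.support}) (dl hG l u v) := by
  have hchoose : (hG.existsUnique_path u v).exists.choose = p :=
    (hG.existsUnique_path u v).unique (hG.existsUnique_path u v).exists.choose_spec hp
  have hlabels : l '' {w | w ∈ p.support} = insert (l u) {x | x ∈ p.support.map l} := by
    have hu : l u ∈ {x | x ∈ p.support.map l} := List.mem_map_of_mem p.start_mem_support
    rw [Set.insert_eq_of_mem hu]
    ext x
    exact List.mem_map.symm
  rw [dl, if_neg huv, hchoose, hlabels]
  exact isGreatest_foldr_max _ _

theorem exists_label_eq_dl (huv : u ≠ v) : ∃ w, l w = dl hG l u v := by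
  obtain ⟨p, hp⟩ := (hG.existsUnique_path u v).exists
  obtain ⟨w, -, hw⟩ := (isGreatest_dl hG l huv hp).1
  exact ⟨w, hw⟩

theorem label_le_dl_right (huv : u ≠ v) : l v ≤ dl hG l u v := by
  obtain ⟨p, hp⟩ := (hG.existsUnique_path u v).exists
  exact (isGreatest_dl hG l huv hp).2 (Set.mem_image_of_mem l p.end_mem_support)

end LabeledTree

theorem IsUTSpace.exists_forall_ne_dist_le {X : Type u} [MetricSpace X] (hX : IsUTSpace X)
    (a b : X) : ∃ c : X, ∀ x ≠ c, dist a b ≤ dist x c := by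
  rcases eq_or_ne a b with rfl | hab
  · exact ⟨a, fun x _ => (dist_self a).trans_le dist_nonneg⟩
  obtain ⟨V, G, hG, l, -, -, Φ, hΦ, hdist⟩ := hX
  obtain ⟨w, hw⟩ := exists_label_eq_dl hG l (hΦ.injective.ne hab)
  obtain ⟨c, rfl⟩ := hΦ.surjective w
  refine ⟨c, fun x hxc => ?_⟩
  calc dist a b = l (Φ c) := by rw [hdist, hw]
    _ ≤ dl hG l (Φ x) (Φ c) := label_le_dl_right hG l (hΦ.injective.ne hxc)
    _ = dist x c := (hdist x c).symm

theorem IsUTSpace.exists_forall_ne_edist_eq_ediam {X : Type u} [MetricSpace X]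
    (hX : IsUTSpace X) (hdiam : Metric.ediam (Set.univ : Set X) ∈ distSet X) :
    ∃ c : X, ∀ x ≠ c, edist x c = Metric.ediam (Set.univ : Set X) := by
  obtain ⟨a, b, hab⟩ := hdiam
  obtain ⟨c, hc⟩ := hX.exists_forall_ne_dist_le a b
  refine ⟨c, fun x hxc => ?_⟩
  apply (Metric.edist_le_ediam_of_mem (Set.mem_univ x) (Set.mem_univ c)).antisymm
  rw [← hab, edist_dist, edist_dist]
  exact ENNReal.ofReal_le_ofReal (hc x hxc)

theorem univ_eq_setOf_edist_eq_union_singleton_iff {X : Type*} [EDist X] {c : X}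
    {r : ℝ≥0∞} :
    (Set.univ : Set X) = {x : X | edist x c = r} ∪ {c} ↔ ∀ x ≠ c, edist x c = r := by
  simp only [eq_comm (a := Set.univ), Set.eq_univ_iff_forall, Set.mem_union, Set.mem_ofPred_eq,
    Set.mem_singleton_iff, or_iff_not_imp_right, ne_eq]

theorem centerOfDistances_eq_pair_of_forall_ne_edist_eq {X : Type*} [MetricSpace X]
    [Nontrivial X] {c : X} {r : ℝ≥0∞} (hc : ∀ x ≠ c, edist x c = r) :
    centerOfDistances X = {0, r} := by
  apply Set.Subset.antisymm
  · rintro t ⟨-, ht⟩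
    obtain ⟨x, rfl⟩ := ht c
    rcases eq_or_ne x c with rfl | hxc
    · exact Or.inl (edist_self x)
    · exact Or.inr (edist_comm c x ▸ hc x hxc)
  · obtain ⟨y, hyc⟩ := exists_ne c
    rintro t (rfl | rfl)
    · exact ⟨⟨c, c, edist_self c⟩, fun p => ⟨p, edist_self p⟩⟩
    · refine ⟨⟨y, c, hc y hyc⟩, fun p => ?_⟩
      rcases eq_or_ne p c with rfl | hpc
      · exact ⟨y, edist_comm p y ▸ hc y hyc⟩
      · exact ⟨c, hc p hpc⟩

/-- Let `(X,d)` be a UT-space with at least two points.  Then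
`C(X) = {0, diam X}` holds if and only if `X` is a centered sphere in `(X,d)` whose
radius equals `diam X`, i.e. there is `c ∈ X` with
`X = {x ∈ X : d(x,c) = diam X} ∪ {c}`. -/
theorem centerOfDistances_eq_iff_centeredSphere
    {X : Type u} [MetricSpace X] [Nontrivial X] (hX : IsUTSpace X) :
    centerOfDistances X = {0, EMetric.diam (Set.univ : Set X)} ↔
      ∃ c : X, (Set.univ : Set X) =
        {x : X | edist x c = EMetric.diam (Set.univ : Set X)} ∪ {c} := by
  simp only [univ_eq_setOf_edist_eq_union_singleton_iff]
  constructor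
  · intro hC
    have hdiam : Metric.ediam (Set.univ : Set X) ∈ centerOfDistances X :=
      hC ▸ Set.mem_insert_of_mem 0 rfl
    exact hX.exists_forall_ne_edist_eq_ediam hdiam.1
  · rintro ⟨c, hc⟩
    exact centerOfDistances_eq_pair_of_forall_ne_edist_eq hc
end

section
/- Let (X,d) be an ultrametric space and let B be an open ball in (X,d). Then B is a centered sphere in (X,d) if and only if B is a centered sphere in the subspace (B, d|_{B×B}). -/
/-- A subset `S` of a metric space is a **centered sphere** if there are `c ∈ S` and
`r ∈ [0,∞)` with `S = {x : d(x,c) = r} ∪ {c}`. -/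
def IsCenteredSphere {X : Type*} [MetricSpace X] (S : Set X) : Prop :=
  ∃ c ∈ S, ∃ r : ℝ, 0 ≤ r ∧ S = {x : X | dist x c = r} ∪ {c}

/-!
Every point of an ultrametric ball is a center of it, so if `B = B_r(c)` is, as a subspace, a
centered sphere with center `p` and radius `s`, then `B = B_r(p)`. When `s < r`, the sphere of
radius `s` about `p` in `X` already lies in `B`; when `r ≤ s`, no point of `B` is at distance `s`
from `p`, so `B = {p}`, which is a centered sphere of radius `0`.
-/

open Metric

theorem isCenteredSphere_singleton {X : Type*} [MetricSpace X] (p : X) :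
    IsCenteredSphere ({p} : Set X) :=
  ⟨p, rfl, 0, le_rfl, by simp⟩

theorem isCenteredSphere_univ_subtype_iff {X : Type*} [MetricSpace X] {S : Set X} :
    IsCenteredSphere (Set.univ : Set S) ↔
      ∃ p ∈ S, ∃ s : ℝ, 0 ≤ s ∧ S ⊆ sphere p s ∪ {p} := by
  simp [IsCenteredSphere, Set.eq_univ_iff_forall, eq_comm (a := Set.univ), Set.subset_def,
    Subtype.ext_iff, Subtype.dist_eq]

theorem isCenteredSphere_ball_of_subset_sphere_union_singleton {X : Type*} [MetricSpace X]
    {p : X} {r s : ℝ} (hr : 0 < r) (hs : 0 ≤ s) (h : ball p r ⊆ sphere p s ∪ {p}) :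
    IsCenteredSphere (ball p r) := by
  have hp : p ∈ ball p r := mem_ball_self hr
  rcases lt_or_ge s r with hsr | hrs
  · have h_sphere : sphere p s ⊆ ball p r := sphere_subset_ball hsr
    exact ⟨p, hp, s, hs,
      h.antisymm (Set.union_subset h_sphere (Set.singleton_subset_iff.2 hp))⟩
  · have h_ball : ball p r ⊆ {p} := fun x hx =>
      (h hx).resolve_left ((mem_ball.1 hx).trans_le hrs).ne
    rw [h_ball.antisymm (Set.singleton_subset_iff.2 hp)]
    exact isCenteredSphere_singleton p

/-- Let `(X,d)` be an ultrametric space and let `B` be an open ball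
in `(X,d)`.  Then `B` is a centered sphere in `(X,d)` if and only if `B` is a
centered sphere in the subspace `(B, d|_{B×B})`. -/
theorem ball_isCenteredSphere_iff_isCenteredSphere_subspace
    {X : Type*} [MetricSpace X] [IsUltrametricDist X] (c : X) (r : ℝ) (hr : 0 < r) :
    IsCenteredSphere (Metric.ball c r) ↔
      IsCenteredSphere (Set.univ : Set (Metric.ball c r)) := by
  rw [isCenteredSphere_univ_subtype_iff]
  constructor
  · rintro ⟨p, hp, s, hs, h⟩
    exact ⟨p, hp, s, hs, h.subset⟩
  · rintro ⟨p, hp, s, hs, h⟩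
    rw [IsUltrametricDist.ball_eq_of_mem hp] at h ⊢
    exact isCenteredSphere_ball_of_subset_sphere_union_singleton hr hs h
end

section
/- Let (X,d) be an ultrametric space. Then the following statements are equivalent: (i) every centered sphere of (X,d) is an open ball of (X,d); (ii) the metric d is equidistant, i.e., there is a constant k > 0 such that d(x,y) = k for all distinct x,y ∈ X; (iii) the set of open balls of (X,d) coincides with the set of centered spheres of (X,d). -/
/-- `S` is an open ball of the metric space `X`. -/
def IsOpenBall {X : Type*} [MetricSpace X] (S : Set X) : Prop :=
  ∃ c : X, ∃ r : ℝ, 0 < r ∧ S = Metric.ball c r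

/-!
If an open ball of an ultrametric space contains `c` and `y`, it is also a ball around `c`, so it
contains every point at distance at most `d(y, c)` from `c`. Hence, when the centered sphere around
`c` through `y` is an open ball, no point other than `c` is closer to `c` than `y`; if this holds
for all `c` and `y`, the distance from `c` is constant off `c`, and symmetry makes the constant
independent of `c`. Conversely, in a nonempty equidistant space the open balls and the centered
spheres are both just the singletons and the whole space.
-/

/-- All distances between distinct points of `X` equal the positive number `k`. The constant is a
parameter, since the shapes of balls and spheres depend on how their radius compares with it. -/
def IsEquidistant (X : Type*) [Dist X] (k : ℝ) : Prop :=
  0 < k ∧ ∀ x y : X, x ≠ y → dist x y = k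

namespace IsEquidistant

section PseudoMetric

variable {X : Type*} [PseudoMetricSpace X] {k : ℝ}

theorem ball_eq_univ (h : IsEquidistant X k) (c : X) {r : ℝ} (hr : k < r) :
    Metric.ball c r = Set.univ := by
  refine Set.eq_univ_of_forall fun x => ?_
  obtain rfl | hxc := eq_or_ne x c
  · exact Metric.mem_ball_self (h.1.trans hr)
  · exact (h.2 x c hxc).trans_lt hr

theorem ball_eq_singleton (h : IsEquidistant X k) (c : X) {r : ℝ} (hr₀ : 0 < r) (hr : r ≤ k) :
    Metric.ball c r = {c} := by
  refine Set.Subset.antisymm (fun x hx => ?_)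
    (Set.singleton_subset_iff.2 (Metric.mem_ball_self hr₀))
  by_contra hxc
  exact (hr.trans_eq (h.2 x c hxc).symm).not_gt hx

theorem sphere_union_singleton_eq_univ (h : IsEquidistant X k) (c : X) :
    Metric.sphere c k ∪ {c} = Set.univ :=
  Set.eq_univ_of_forall fun x => (eq_or_ne x c).elim Or.inr fun hxc => Or.inl (h.2 x c hxc)

theorem sphere_union_singleton_eq_singleton (h : IsEquidistant X k) (c : X) {r : ℝ}
    (hr : r ≠ k) : Metric.sphere c r ∪ {c} = {c} := by
  refine Set.union_eq_right.2 fun x hx => ?_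
  by_contra hxc
  exact hr (hx.symm.trans (h.2 x c hxc))

end PseudoMetric

section Metric

variable {X : Type*} [MetricSpace X] {k : ℝ} {S : Set X}

/- The quantifier over `c` also governs `S = Set.univ`: an empty space has no balls or spheres. -/
theorem isOpenBall_iff (h : IsEquidistant X k) :
    IsOpenBall S ↔ ∃ c : X, S = {c} ∨ S = Set.univ := by
  refine exists_congr fun c => ⟨?_, ?_⟩
  · rintro ⟨r, hr₀, rfl⟩
    exact (le_or_gt r k).imp (h.ball_eq_singleton c hr₀) (h.ball_eq_univ c)
  · rintro (rfl | rfl)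
    · exact ⟨k, h.1, (h.ball_eq_singleton c h.1 le_rfl).symm⟩
    · exact ⟨k + 1, add_pos h.1 one_pos, (h.ball_eq_univ c (lt_add_one k)).symm⟩

theorem isCenteredSphere_iff (h : IsEquidistant X k) :
    IsCenteredSphere S ↔ ∃ c : X, S = {c} ∨ S = Set.univ := by
  refine exists_congr fun c => ⟨?_, ?_⟩
  · rintro ⟨-, r, -, rfl⟩
    obtain rfl | hr := eq_or_ne r k
    · exact Or.inr (h.sphere_union_singleton_eq_univ c)
    · exact Or.inl (h.sphere_union_singleton_eq_singleton c hr)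
  · rintro (rfl | rfl)
    · exact ⟨Set.mem_singleton c, 0, le_rfl,
        (h.sphere_union_singleton_eq_singleton c h.1.ne).symm⟩
    · exact ⟨Set.mem_univ c, k, h.1.le, (h.sphere_union_singleton_eq_univ c).symm⟩

theorem setOf_isOpenBall_eq_setOf_isCenteredSphere (h : IsEquidistant X k) :
    {S : Set X | IsOpenBall S} = {S : Set X | IsCenteredSphere S} :=
  Set.ext fun _ => h.isOpenBall_iff.trans h.isCenteredSphere_iff.symm

theorem exists_of_forall_dist_eq (h : ∀ c x y : X, x ≠ c → y ≠ c → dist x c = dist y c) :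
    ∃ k : ℝ, IsEquidistant X k := by
  obtain hX | hX := subsingleton_or_nontrivial X
  · exact ⟨1, one_pos, fun x y hxy => absurd (Subsingleton.elim x y) hxy⟩
  obtain ⟨z, w, hzw⟩ := exists_pair_ne X
  refine ⟨dist z w, dist_pos.2 hzw, fun x y hxy => ?_⟩
  obtain rfl | hyw := eq_or_ne y w
  · exact h y x z hxy hzw
  calc
    dist x y = dist w y := h y x w hxy hyw.symm
    _ = dist y w := dist_comm w y
    _ = dist z w := h w y z hyw hzw

end Metric

end IsEquidistant

section Ultrametric

variable {X : Type*} [MetricSpace X] [IsUltrametricDist X]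

theorem IsOpenBall.closedBall_subset {S : Set X} (hS : IsOpenBall S) {c y : X} (hc : c ∈ S)
    (hy : y ∈ S) : Metric.closedBall c (dist y c) ⊆ S := by
  obtain ⟨a, r, -, rfl⟩ := hS
  rw [IsUltrametricDist.ball_eq_of_mem hc] at hy ⊢
  exact Metric.closedBall_subset_ball hy

theorem dist_le_dist_of_isOpenBall_sphere_union_singleton {c x y : X}
    (h : IsOpenBall (Metric.sphere c (dist y c) ∪ {c})) (hxc : x ≠ c) :
    dist y c ≤ dist x c := by
  by_contra! hlt
  have hx : x ∈ Metric.sphere c (dist y c) ∪ {c} :=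
    h.closedBall_subset (Or.inr rfl) (Or.inl rfl) hlt.le
  exact hx.elim hlt.ne hxc

theorem exists_isEquidistant_of_forall_isCenteredSphere
    (h : ∀ S : Set X, IsCenteredSphere S → IsOpenBall S) : ∃ k : ℝ, IsEquidistant X k := by
  have sphere_isOpenBall (c y : X) : IsOpenBall (Metric.sphere c (dist y c) ∪ {c}) :=
    h _ ⟨c, Or.inr rfl, dist y c, dist_nonneg, rfl⟩
  exact IsEquidistant.exists_of_forall_dist_eq fun c x y hxc hyc => le_antisymm
    (dist_le_dist_of_isOpenBall_sphere_union_singleton (sphere_isOpenBall c x) hyc)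
    (dist_le_dist_of_isOpenBall_sphere_union_singleton (sphere_isOpenBall c y) hxc)

end Ultrametric

/-- For an ultrametric space `(X,d)` the following are equivalent:
(i) every centered sphere of `(X,d)` is an open ball of `(X,d)`;
(ii) the metric `d` is equidistant, i.e. there is `k > 0` with `d(x,y) = k` for all
distinct `x, y`;
(iii) the set of open balls of `(X,d)` coincides with the set of centered spheres. -/
theorem centeredSphere_subset_ball_iff_equidistant
    {X : Type*} [MetricSpace X] [IsUltrametricDist X] :
    ((∀ S : Set X, IsCenteredSphere S → IsOpenBall S) ↔
      ∃ k : ℝ, 0 < k ∧ ∀ x y : X, x ≠ y → dist x y = k) ∧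
    ((∃ k : ℝ, 0 < k ∧ ∀ x y : X, x ≠ y → dist x y = k) ↔
      {S : Set X | IsOpenBall S} = {S : Set X | IsCenteredSphere S}) := by
  have equidistant_imp : (∃ k : ℝ, IsEquidistant X k) →
      {S : Set X | IsOpenBall S} = {S : Set X | IsCenteredSphere S} :=
    fun ⟨_, hk⟩ => hk.setOf_isOpenBall_eq_setOf_isCenteredSphere
  exact ⟨⟨exists_isEquidistant_of_forall_isCenteredSphere, fun h => (equidistant_imp h).ge⟩,
    ⟨equidistant_imp, fun h => exists_isEquidistant_of_forall_isCenteredSphere h.ge⟩⟩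
end

section
/- Let (X,d) be an ultrametric space with at least two points. Then (X,d) is weakly similar to an unbounded ultrametric space if and only if diam X does not belong to the distance set D(X). -/
open scoped ENNReal

universe u

/-- The distance set `D(X) = {d(x,y) : x,y ∈ X}` as a set of real numbers. -/
def realDistSet (X : Type*) [MetricSpace X] : Set ℝ :=
  {t | ∃ x y : X, dist x y = t}

/-- `(X,d)` and `(Y,ρ)` are **weakly similar**: there is a bijection `Φ : X → Y` and a
strictly increasing bijection `f : D(Y) → D(X)` between the distance sets such that
`d(x,y) = f(ρ(Φ x, Φ y))` for all `x, y ∈ X`. -/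
def WeaklySimilar (X : Type*) (Y : Type*) [MetricSpace X] [MetricSpace Y] : Prop :=
  ∃ Φ : X → Y, Function.Bijective Φ ∧
    ∃ f : realDistSet Y → realDistSet X, StrictMono f ∧ Function.Bijective f ∧
      ∀ x y : X, dist x y = (f ⟨dist (Φ x) (Φ y), ⟨Φ x, Φ y, rfl⟩⟩ : ℝ)

/-- `(Y,ρ)` is an unbounded ultrametric space. -/
def IsUnboundedUltrametric (Y : Type*) [MetricSpace Y] : Prop :=
  IsUltrametricDist Y ∧ EMetric.diam (Set.univ : Set Y) = ⊤

/-!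
Both sides of the equivalence only concern distance sets. The diameter is attained exactly when
`D(X)` has a greatest element, a space is unbounded exactly when its distance set is not bounded
above, and a weak similarity contains an order isomorphism of distance sets. So a greatest distance
in `X` yields one in every weakly similar space, which is then bounded.

Conversely, suppose that `D(X)` has no greatest element. If `D(X)` is unbounded take `g = id`, and
otherwise `g t = 1 / (b - t) - 1 / b` where `b = sup D(X)`. This `g` is strictly increasing on
`D(X)`, vanishes at `0` and is unbounded on `D(X)`, and `g ∘ d` is again an ultrametric because a
monotone map preserves the inequality `a ≤ max b c`.
-/

theorem exists_isGreatest_of_orderIso {α β : Type*} [Preorder α] [Preorder β] {s : Set α}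
    {t : Set β} (e : s ≃o t) : (∃ a, IsGreatest s a) → ∃ b, IsGreatest t b := by
  rintro ⟨a, ha, hmax⟩
  refine ⟨e ⟨a, ha⟩, (e ⟨a, ha⟩).2, fun b hb => ?_⟩
  have hle : (⟨b, hb⟩ : t) ≤ e ⟨a, ha⟩ := e.symm_apply_le.1 (hmax (e.symm ⟨b, hb⟩).2)
  exact hle

theorem subset_Iio_of_isLUB_of_notMem {α : Type*} [PartialOrder α] {s : Set α} {b : α}
    (hb : IsLUB s b) (hbs : b ∉ s) : s ⊆ Set.Iio b :=
  fun _ ht => (hb.1 ht).lt_of_ne (ne_of_mem_of_not_mem ht hbs)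

theorem strictMonoOn_inv_sub {K : Type*} [Field K] [LinearOrder K] [IsStrictOrderedRing K] (b : K) :
    StrictMonoOn (fun t => (b - t)⁻¹) (Set.Iio b) := fun _ _ _ ht hst =>
  inv_strictAnti₀ (sub_pos.2 ht) (sub_lt_sub_left hst b)

theorem not_bddAbove_image_inv_sub_of_isLUB {K : Type*} [Field K] [LinearOrder K]
    [IsStrictOrderedRing K] {s : Set K} {b : K} (hne : s.Nonempty) (hb : IsLUB s b) (hbs : b ∉ s) :
    ¬ BddAbove ((fun t => (b - t)⁻¹) '' s) := by
  rintro ⟨c, hc⟩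
  have hlt : ∀ t ∈ s, t < b := subset_Iio_of_isLUB_of_notMem hb hbs
  have hle : ∀ t ∈ s, (b - t)⁻¹ ≤ c := Set.forall_mem_image.1 hc
  obtain ⟨t₀, ht₀⟩ := hne
  have hc_pos : 0 < c := (inv_pos.2 (sub_pos.2 (hlt t₀ ht₀))).trans_le (hle t₀ ht₀)
  have hupper : b - c⁻¹ ∈ upperBounds s := fun t ht =>
    le_sub_comm.1 (inv_le_of_inv_le₀ (sub_pos.2 (hlt t ht)) (hle t ht))
  exact (sub_lt_self b (inv_pos.2 hc_pos)).not_ge (hb.2 hupper)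

theorem exists_strictMonoOn_not_bddAbove_image {s : Set ℝ} (hne : s.Nonempty)
    (hmax : ¬ ∃ M, IsGreatest s M) :
    ∃ g : ℝ → ℝ, StrictMonoOn g s ∧ g 0 = 0 ∧ ¬ BddAbove (g '' s) := by
  by_cases hbdd : BddAbove s
  · obtain ⟨b, hb⟩ := Real.exists_isLUB hne hbdd
    have hbs : b ∉ s := fun h => hmax ⟨b, h, hb.1⟩
    have hsub : s ⊆ Set.Iio b := subset_Iio_of_isLUB_of_notMem hb hbs
    refine ⟨fun t => (b - t)⁻¹ - b⁻¹, fun x hx y hy hxy => ?_, by simp, ?_⟩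
    · exact sub_lt_sub_right (strictMonoOn_inv_sub b (hsub hx) (hsub hy) hxy) _
    · rintro ⟨c, hc⟩
      refine not_bddAbove_image_inv_sub_of_isLUB hne hb hbs ⟨c + b⁻¹, ?_⟩
      exact Set.forall_mem_image.2 fun t ht =>
        sub_le_iff_le_add.1 (hc (Set.mem_image_of_mem _ ht))
  · exact ⟨id, strictMonoOn_id, rfl, by rwa [Set.image_id]⟩

section DistanceSet

variable {X Y : Type*} [MetricSpace X] [MetricSpace Y]

theorem dist_mem_realDistSet (x y : X) : dist x y ∈ realDistSet X := ⟨x, y, rfl⟩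

theorem realDistSet_nonempty [Nonempty X] : (realDistSet X).Nonempty :=
  let ⟨x⟩ := ‹Nonempty X›
  ⟨dist x x, dist_mem_realDistSet x x⟩

theorem mem_upperBounds_realDistSet {c : ℝ} :
    c ∈ upperBounds (realDistSet X) ↔ ∀ x y : X, dist x y ≤ c := by
  constructor
  · exact fun hc x y => hc (dist_mem_realDistSet x y)
  · rintro h _ ⟨x, y, rfl⟩
    exact h x y

theorem ediam_univ_eq_top_iff_not_bddAbove :
    Metric.ediam (Set.univ : Set X) = ⊤ ↔ ¬ BddAbove (realDistSet X) := by
  rw [← not_iff_not, not_not, ← ne_eq, ← Metric.isBounded_iff_ediam_ne_top, Metric.isBounded_iff]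
  simp [BddAbove, Set.Nonempty, mem_upperBounds_realDistSet]

theorem edist_eq_ediam_univ_iff (x y : X) :
    edist x y = Metric.ediam (Set.univ : Set X) ↔ IsGreatest (realDistSet X) (dist x y) := by
  rw [← (Metric.edist_le_ediam_of_mem (Set.mem_univ x) (Set.mem_univ y)).ge_iff_eq,
    Metric.ediam_le_iff, IsGreatest, mem_upperBounds_realDistSet]
  simp [dist_mem_realDistSet, edist_dist, ENNReal.ofReal_le_ofReal_iff]

theorem exists_edist_eq_ediam_univ_iff :
    (∃ x y : X, edist x y = Metric.ediam (Set.univ : Set X)) ↔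
      ∃ M, IsGreatest (realDistSet X) M := by
  simp only [edist_eq_ediam_univ_iff]
  constructor
  · rintro ⟨x, y, hxy⟩
    exact ⟨dist x y, hxy⟩
  · rintro ⟨_, ⟨x, y, rfl⟩, hupper⟩
    exact ⟨x, y, dist_mem_realDistSet x y, hupper⟩

theorem realDistSet_eq_image {g : ℝ → ℝ} {Φ : X → Y} (hΦ : Function.Surjective Φ)
    (hdist : ∀ x y, dist (Φ x) (Φ y) = g (dist x y)) : realDistSet Y = g '' realDistSet X := by
  ext t
  simp [realDistSet, hΦ.exists, hdist]

namespace WeaklySimilar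

theorem nonempty_orderIso (h : WeaklySimilar X Y) : Nonempty (realDistSet X ≃o realDistSet Y) := by
  obtain ⟨_, _, f, hf, hf_bij, _⟩ := h
  exact ⟨(hf.orderIsoOfSurjective f hf_bij.2).symm⟩

theorem of_strictMonoOn {g : ℝ → ℝ} (hg : StrictMonoOn g (realDistSet X)) {Φ : X → Y}
    (hΦ : Function.Bijective Φ) (hdist : ∀ x y, dist (Φ x) (Φ y) = g (dist x y)) :
    WeaklySimilar X Y := by
  let e : realDistSet X ≃o realDistSet Y :=
    (hg.orderIso g _).trans (OrderIso.setCongr _ _ (realDistSet_eq_image hΦ.2 hdist).symm)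
  refine ⟨Φ, hΦ, e.symm, e.symm.strictMono, e.symm.bijective, fun x y => ?_⟩
  have he : e ⟨dist x y, dist_mem_realDistSet x y⟩ =
      ⟨dist (Φ x) (Φ y), dist_mem_realDistSet (Φ x) (Φ y)⟩ := Subtype.ext (hdist x y).symm
  exact congrArg Subtype.val (e.symm_apply_eq.2 he.symm).symm

end WeaklySimilar

end DistanceSet

section Rescaling

variable {X : Type*} [MetricSpace X]

theorem map_dist_le_max [IsUltrametricDist X] {β : Type*} [LinearOrder β] {g : ℝ → β}
    (hg : MonotoneOn g (realDistSet X)) (x y z : X) :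
    g (dist x z) ≤ max (g (dist x y)) (g (dist y z)) :=
  le_max_iff.2 <| (le_max_iff.1 (dist_triangle_max x y z)).imp
    (hg (dist_mem_realDistSet x z) (dist_mem_realDistSet x y))
    (hg (dist_mem_realDistSet x z) (dist_mem_realDistSet y z))

theorem map_zero_le_map_dist {β : Type*} [Preorder β] {g : ℝ → β}
    (hg : MonotoneOn g (realDistSet X)) (x y : X) : g 0 ≤ g (dist x y) :=
  hg (dist_self x ▸ dist_mem_realDistSet x x) (dist_mem_realDistSet x y) dist_nonneg

theorem map_dist_eq_map_zero_iff {β : Type*} {g : ℝ → β} (hg : Set.InjOn g (realDistSet X))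
    (x y : X) : g (dist x y) = g 0 ↔ x = y := by
  rw [hg.eq_iff (dist_mem_realDistSet x y) (dist_self x ▸ dist_mem_realDistSet x x), dist_eq_zero]

/-- The set `X` carrying the rescaled distance `(x, y) ↦ g (dist x y)`. It is a synonym of `X`
indexed by the properties of `g` that make this a metric when `X` is an ultrametric space. -/
def Rescaled {g : ℝ → ℝ} (_ : StrictMonoOn g (realDistSet X)) (_ : g 0 = 0) : Type _ := X

namespace Rescaled

variable {g : ℝ → ℝ} (hg : StrictMonoOn g (realDistSet X)) (hg0 : g 0 = 0)

/-- The identity map of `X`, seen as a bijection from `X` onto its rescaling. -/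
def equiv : X ≃ Rescaled hg hg0 := Equiv.refl X

variable [IsUltrametricDist X]

instance : MetricSpace (Rescaled hg hg0) where
  dist x y := g (dist ((equiv hg hg0).symm x) ((equiv hg hg0).symm y))
  dist_self x := by rw [dist_self, hg0]
  dist_comm x y := by rw [dist_comm]
  dist_triangle x y z := by
    have hnonneg (a b : X) : 0 ≤ g (dist a b) := hg0 ▸ map_zero_le_map_dist hg.monotoneOn a b
    exact (map_dist_le_max hg.monotoneOn _ _ _).trans
      (max_le_add_of_nonneg (hnonneg _ _) (hnonneg _ _))
  eq_of_dist_eq_zero h :=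
    (equiv hg hg0).symm.injective ((map_dist_eq_map_zero_iff hg.injOn _ _).1 (h.trans hg0.symm))

instance : IsUltrametricDist (Rescaled hg hg0) where
  dist_triangle_max _ _ _ := map_dist_le_max hg.monotoneOn _ _ _

theorem dist_equiv (x y : X) : dist (equiv hg hg0 x) (equiv hg hg0 y) = g (dist x y) := rfl

theorem realDistSet_eq : realDistSet (Rescaled hg hg0) = g '' realDistSet X :=
  realDistSet_eq_image (equiv hg hg0).surjective (dist_equiv hg hg0)

theorem weaklySimilar : WeaklySimilar X (Rescaled hg hg0) :=
  .of_strictMonoOn hg (equiv hg hg0).bijective (dist_equiv hg hg0)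

end Rescaled

end Rescaling

/-- Let `(X,d)` be an ultrametric space with at least two points.
Then `(X,d)` is weakly similar to an unbounded ultrametric space if and only if
`diam X` does not belong to the distance set `D(X)` (i.e. the diameter is not
realized as a distance). -/
theorem weaklySimilar_unbounded_iff_diam_not_attained
    {X : Type u} [MetricSpace X] [IsUltrametricDist X] [Nontrivial X] :
    (∃ (Y : Type u) (mY : MetricSpace Y),
        @IsUnboundedUltrametric Y mY ∧ @WeaklySimilar X Y _ mY) ↔
      EMetric.diam (Set.univ : Set X) ∉ {t : ℝ≥0∞ | ∃ x y : X, edist x y = t} := by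
  constructor
  · rintro ⟨Y, _, ⟨-, hY⟩, hXY⟩ hX
    obtain ⟨e⟩ := hXY.nonempty_orderIso
    obtain ⟨M, hM⟩ := exists_isGreatest_of_orderIso e (exists_edist_eq_ediam_univ_iff.1 hX)
    exact ediam_univ_eq_top_iff_not_bddAbove.1 hY hM.bddAbove
  · intro hX
    obtain ⟨g, hg, hg0, hunbdd⟩ := exists_strictMonoOn_not_bddAbove_image
      realDistSet_nonempty (mt exists_edist_eq_ediam_univ_iff.2 hX)
    rw [← Rescaled.realDistSet_eq hg hg0] at hunbdd
    exact ⟨Rescaled hg hg0, inferInstance,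
      ⟨inferInstance, ediam_univ_eq_top_iff_not_bddAbove.2 hunbdd⟩, Rescaled.weaklySimilar hg hg0⟩
end
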